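/- Let m ≥ 1 and let G be a triangle-free simple graph on vertex set {1,…,m} with edge set W. Let α, β : {1,…,m} → ℤ, γ : W → ℤ, and let k, r, δ be integers with 0 < r < k and δ ≥ 2 such that: (i) 0 ≤ α(i) ≤ r − 1 for all i; (ii) β(i) ≥ 0 for all i; (iii) γ(w) ≥ 1 for all w ∈ W; (iv) k ≤ rm − Σ_{i=1}^m α(i) − Σ_{w∈W} γ(w); (v) r − α(i) > Σ_{w∈W, i∈w} γ(w) for all i. Set n = (r+δ−1)m − Σ_{i=1}^m α(i) + Σ_{i=1}^m β(i) − Σ_{w∈W} γ(w) and d = n − k + 1 − max{(δ−1)|I| + Σ_{i∈I} β(i) : I ∈ V_{<k}}, where V_{<k} = {I ⊆ {1,…,m} : r|I| − Σ_{i∈I} α(i) − Σ_{w={i,j}∈W, i,j∈I} γ(w) < k}. Then there exists a finite field F and a linear code C over F of length n, dimension k, with all-symbol locality (r,δ), whose minimum distance equals d. -/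

import Mathlib

/-!
Attach to each vertex `i` a set `N i` of `r - α i + δ - 1 + β i` coordinates, such that `N i` and
`N j` share `γ {i, j}` coordinates when `{i, j}` is an edge and are disjoint otherwise, and no
coordinate lies in three of these sets. Put `b i = δ - 1 + β i`. The code is the kernel of a
generic parity-check matrix with `b i` rows supported on `N i` for each `i`, and
`n - k - ∑ b i ≥ 0` rows with full support. Genericity (`exists_generic_matrix`) means that columns
are independent as soon as they can be matched to distinct rows in whose support they lie.

* Dimension: as `∑_{w ∋ i} γ w < r - α i`, there are at least `b i` private coordinates in `N i`,
  so all rows can be matched to distinct columns and the kernel has dimension exactly `k`.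
* Locality: on `N i` the local rows force weight more than `b i`; dropping up to `β i` coordinates
  leaves a set of size at most `r - α i + δ - 1` on which nonzero words have weight at least `δ`.
* Distance: by Hall's theorem the support of a nonzero codeword contains a set `X` of columns that
  meets fewer than `|X|` rows. If `I` is the set of vertices `i` with `X` disjoint from `N i`, then
  `X` meets `n - k - ∑_{i ∈ I} b i` rows and fits in the complement of `⋃_{i ∈ I} N i`.
  Conversely any `n - k - ∑_{i ∈ I} b i + 1` columns in that complement are dependent. Such columns
  exist exactly when `|⋃_{i ∈ I} N i| < k + ∑_{i ∈ I} b i`, and counting private and shared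
  coordinates turns this into the condition defining `V_{<k}`.
-/

open scoped BigOperators

attribute [local instance] Classical.propDecidable

/-- The number of coordinates within `S` on which `x` and `y` differ. -/
def projDist {ι F : Type} [DecidableEq ι] [DecidableEq F]
    (S : Finset ι) (x y : ι → F) : ℕ :=
  (S.filter fun i => x i ≠ y i).card

/-- `S` is an `(r,δ)`-locality set of the code `C`: it has at most `r + δ - 1`
coordinates, and any two codewords whose projections to `S` differ, differ in at
least `δ` coordinates of `S`. -/
def IsLocalitySet {ι F : Type} [Fintype ι] [DecidableEq ι] [Field F] [DecidableEq F]
    (C : Submodule F (ι → F)) (r δ : ℤ) (S : Finset ι) : Prop :=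
  (S.card : ℤ) ≤ r + δ - 1 ∧
    ∀ x ∈ C, ∀ y ∈ C, (∃ i ∈ S, x i ≠ y i) → δ ≤ (projDist S x y : ℤ)

/-- The code `C` has all-symbol locality `(r,δ)`. -/
def HasAllSymbolLocality {ι F : Type} [Fintype ι] [DecidableEq ι] [Field F] [DecidableEq F]
    (C : Submodule F (ι → F)) (r δ : ℤ) : Prop :=
  ∀ i : ι, ∃ S : Finset ι, i ∈ S ∧ IsLocalitySet C r δ S

/-- `d` is the minimum (Hamming) distance of the code `C`. -/
def IsMinDist {ι F : Type} [Fintype ι] [DecidableEq ι] [Field F] [DecidableEq F]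
    (C : Submodule F (ι → F)) (d : ℕ) : Prop :=
  (∃ x ∈ C, ∃ y ∈ C, x ≠ y ∧ hammingDist x y = d) ∧
    ∀ x ∈ C, ∀ y ∈ C, x ≠ y → d ≤ hammingDist x y


/-! ### Generic matrices with prescribed support -/

/-- Over some prime field there is a matrix with support in `P` whose columns are as independent
as `P` allows: a set `X` of columns matched into rows along `P` carries no nonzero linear
dependency, and this is already visible on the matched rows. The relevant minors are nonzero
polynomials in the entries, so some integer point avoids all their zeros, and reduction modulo a
large prime keeps the values nonzero. -/
theorem exists_generic_matrix {R ι : Type} [Fintype R] [Fintype ι] (P : R → ι → Prop) :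
    ∃ (p : ℕ) (_ : Fact p.Prime) (H : R → ι → ZMod p),
      (∀ i j, ¬ P i j → H i j = 0) ∧
      ∀ (X : Finset ι) (f : X → R), Function.Injective f → (∀ c, P (f c) c) →
        ∀ x : ι → ZMod p, (∀ c : X, ∑ e ∈ X, H (f c) e * x e = 0) → ∀ c ∈ X, x c = 0 := by
  let A : R → ι → MvPolynomial (R × ι) ℤ := fun i j =>
    if P i j then MvPolynomial.X (i, j) else 0
  let D : (Σ X : Finset ι, (X → R)) → MvPolynomial (R × ι) ℤ := fun t =>
    (Matrix.of fun a b : t.1 => A (t.2 a) b).det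
  let good : (Σ X : Finset ι, (X → R)) → Prop := fun t =>
    Function.Injective t.2 ∧ ∀ c, P (t.2 c) c
  have hD : ∀ t, good t → D t ≠ 0 := by
    rintro ⟨X, f⟩ ⟨hf, hP⟩ h0
    -- Specialising to the indicator of the matching turns the submatrix into the identity.
    have h1 := congrArg
      (MvPolynomial.eval fun q : R × ι => if ∃ a : X, q = (f a, (a : ι)) then (1 : ℤ) else 0) h0
    have h2 : ((MvPolynomial.eval fun q : R × ι =>
        if ∃ a : X, q = (f a, (a : ι)) then (1 : ℤ) else 0).mapMatrix
          (Matrix.of fun a b : X => A (f a) b)) = 1 := by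
      ext a b
      simp only [RingHom.mapMatrix_apply, Matrix.map_apply, Matrix.of_apply, A, Matrix.one_apply]
      by_cases hab : a = b
      · subst hab
        simp [hP a]
      · have : ¬ ∃ c : X, (f a, (b : ι)) = (f c, (c : ι)) := by
          rintro ⟨c, hc⟩
          rw [Prod.mk.injEq] at hc
          exact hab ((hf hc.1).trans (Subtype.ext hc.2.symm))
        by_cases hp : P (f a) b
        · simp only [hp, if_true, MvPolynomial.eval_X, if_neg this, if_neg hab]
        · simp [hp, hab]
    simp only [D, RingHom.map_det, h2, map_zero, Matrix.det_one] at h1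
    exact one_ne_zero h1
  have hQ : (∏ t ∈ Finset.univ.filter good, D t) ≠ 0 :=
    Finset.prod_ne_zero_iff.2 fun t ht => hD t (Finset.mem_filter.1 ht).2
  obtain ⟨y, hy⟩ : ∃ y : R × ι → ℤ,
      MvPolynomial.eval y (∏ t ∈ Finset.univ.filter good, D t) ≠ 0 := by
    by_contra! h
    exact hQ (MvPolynomial.funext fun y => by simpa using h y)
  obtain ⟨p, hp, hprime⟩ := Nat.exists_infinite_primes
    ((MvPolynomial.eval y (∏ t ∈ Finset.univ.filter good, D t)).natAbs + 1)
  have : Fact p.Prime := ⟨hprime⟩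
  have hp0 : ((MvPolynomial.eval y (∏ t ∈ Finset.univ.filter good, D t) : ℤ) : ZMod p) ≠ 0 := by
    rw [Ne, ZMod.intCast_zmod_eq_zero_iff_dvd, Int.natCast_dvd]
    intro h
    have := Nat.le_of_dvd (Int.natAbs_pos.2 hy) h
    omega
  refine ⟨p, ‹_›, fun i j => ((MvPolynomial.eval y (A i j) : ℤ) : ZMod p), ?_, ?_⟩
  · intro i j h
    simp [A, h]
  · intro X f hf hP x hx c hc
    have hdet : (Matrix.of fun a b : X =>
        ((MvPolynomial.eval y (A (f a) b) : ℤ) : ZMod p)).det ≠ 0 := by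
      have h1 : ((MvPolynomial.eval y (D ⟨X, f⟩) : ℤ) : ZMod p) ≠ 0 := by
        intro h
        apply hp0
        rw [map_prod, Int.cast_prod]
        exact Finset.prod_eq_zero (i := ⟨X, f⟩)
          (Finset.mem_filter.2 ⟨Finset.mem_univ _, hf, hP⟩) h
      have h2 : ((MvPolynomial.eval y (D ⟨X, f⟩) : ℤ) : ZMod p) =
          ((Int.castRingHom (ZMod p)).comp (MvPolynomial.eval y)) (D ⟨X, f⟩) := rfl
      rw [h2] at h1
      simp only [D, RingHom.map_det] at h1
      exact h1
    have := Matrix.eq_zero_of_mulVec_eq_zero hdet (v := fun b : X => x b) (by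
      ext a
      have := hx a
      rw [← Finset.sum_coe_sort] at this
      simpa [Matrix.mulVec, dotProduct] using this)
    exact congrFun this ⟨c, hc⟩

/-! ### The code attached to a family of coordinate sets -/

section Core

variable {ι V : Type} [Fintype ι] [Fintype V]

/-- Support pattern of the parity-check matrix: for every vertex `i` there are `b i` local rows
supported on `N i`, and there are `g` further rows with full support. -/
def rowPattern (N : V → Finset ι) (b : V → ℕ) (g : ℕ) :
    (Σ i, Fin (b i)) ⊕ Fin g → ι → Prop :=
  Sum.elim (fun q e => e ∈ N q.1) (fun _ _ => True)

/-- The rows can be matched to distinct columns in their support: local rows use private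
coordinates of their vertex, global rows use any coordinates that are left. -/
theorem exists_row_matching [DecidableEq ι] (N : V → Finset ι) (b : V → ℕ) (g k : ℕ)
    (hR : ∑ i, b i + g + k = Fintype.card ι)
    (hpriv : ∀ i, b i ≤ (Finset.univ.filter fun e => ∀ j, e ∈ N j ↔ j = i).card) :
    ∃ h : (Σ i, Fin (b i)) ⊕ Fin g → ι, Function.Injective h ∧
      ∀ ρ, rowPattern N b g ρ (h ρ) := by
  choose T hT hTc using fun i => Finset.exists_subset_card_eq (hpriv i)
  have hT' : ∀ i, ∀ e ∈ T i, ∀ j, e ∈ N j ↔ j = i := fun i e he =>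
    (Finset.mem_filter.1 (hT i he)).2
  have hcard : (Finset.univ.biUnion T).card ≤ ∑ i, b i :=
    Finset.card_biUnion_le.trans (by simp [hTc])
  obtain ⟨U, hU, hUc⟩ : ∃ U ⊆ (Finset.univ.biUnion T)ᶜ, U.card = g := by
    apply Finset.exists_subset_card_eq
    rw [Finset.card_compl]
    omega
  let φ : ∀ i, Fin (b i) ≃ T i := fun i => (finCongr (hTc i).symm).trans (T i).equivFin.symm
  let ψ : Fin g ≃ U := (finCongr hUc.symm).trans U.equivFin.symm
  refine ⟨Sum.elim (fun q => φ q.1 q.2) (fun t => ψ t), ?_, ?_⟩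
  · apply Function.Injective.sumElim
    · rintro ⟨i, s⟩ ⟨j, t⟩ hij
      simp only at hij
      have hi : i = j := by
        have h1 := (hT' i _ (φ i s).2 i).2 rfl
        rw [hij] at h1
        exact (hT' j _ (φ j t).2 i).1 h1
      subst hi
      rw [(φ i).injective (Subtype.ext hij)]
    · intro s t h
      exact ψ.injective (Subtype.ext h)
    · intro q t h
      have h1 := hU (ψ t).2
      rw [← h, Finset.mem_compl] at h1
      exact h1 (Finset.mem_biUnion.2 ⟨q.1, Finset.mem_univ _, (φ q.1 q.2).2⟩)
  · rintro (⟨i, s⟩ | t)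
    · exact (hT' i _ (φ i s).2 i).2 rfl
    · trivial

/-- The kernel of a generic matrix with support pattern `rowPattern N b g`. It has dimension `k`;
a codeword that is nonzero on `N i` has weight more than `b i` there. The last two clauses say
that the minimum weight is `card ι - k + 1` minus the maximum of `∑ i ∈ I, b i` over those `I`
for which the union of the `N i`, `i ∈ I`, has fewer than `k + ∑ i ∈ I, b i` elements (written
additively to avoid truncated subtraction). -/
theorem exists_code [DecidableEq ι] (N : V → Finset ι) (b : V → ℕ) (g k : ℕ)
    (hR : ∑ i, b i + g + k = Fintype.card ι)
    (hpriv : ∀ i, b i ≤ (Finset.univ.filter fun e => ∀ j, e ∈ N j ↔ j = i).card) :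
    ∃ (p : ℕ) (_ : Fact p.Prime) (C : Submodule (ZMod p) (ι → ZMod p)),
      Module.finrank (ZMod p) C = k ∧
      (∀ x ∈ C, ∀ i, (∃ e ∈ N i, x e ≠ 0) → b i < ((N i).filter fun e => x e ≠ 0).card) ∧
      (∀ x ∈ C, x ≠ 0 → ∃ I : Finset V, (I.biUnion N).card < k + ∑ i ∈ I, b i ∧
        Fintype.card ι + 1 ≤ hammingNorm x + k + ∑ i ∈ I, b i) ∧
      (∀ I : Finset V, (I.biUnion N).card < k + ∑ i ∈ I, b i →
        ∃ x ∈ C, x ≠ 0 ∧ hammingNorm x + k + ∑ i ∈ I, b i ≤ Fintype.card ι + 1) := by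
  obtain ⟨p, hp, H, hH0, hH⟩ := exists_generic_matrix (rowPattern N b g)
  let C : Submodule (ZMod p) (ι → ZMod p) := LinearMap.ker (Matrix.mulVecLin (Matrix.of H))
  have hC : ∀ x, x ∈ C ↔ ∀ ρ, ∑ e, H ρ e * x e = 0 := by
    intro x
    simp only [C, LinearMap.mem_ker, funext_iff]
    rfl
  have hRcard : Fintype.card ((Σ i, Fin (b i)) ⊕ Fin g) = ∑ i, b i + g := by simp
  refine ⟨p, hp, C, ?_, ?_, ?_, ?_⟩
  · apply le_antisymm
    · obtain ⟨h, hinj, hpat⟩ := exists_row_matching N b g k hR hpriv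
      let X : Finset ι := Finset.univ.image h
      have hX : ∀ c : X, ∃ ρ, h ρ = c := fun c => by
        obtain ⟨ρ, -, hρ⟩ := Finset.mem_image.1 c.2
        exact ⟨ρ, hρ⟩
      choose f hf using hX
      have hfinj : Function.Injective f := fun c d hcd => by
        apply Subtype.ext
        rw [← hf c, ← hf d, hcd]
      have hXc : X.card = ∑ i, b i + g := by
        rw [Finset.card_image_of_injective _ hinj, Finset.card_univ, hRcard]
      -- A codeword is determined by its coordinates outside `X`, of which there are `k`.
      let π : (ι → ZMod p) →ₗ[ZMod p] ((Xᶜ : Finset ι) → ZMod p) :=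
        LinearMap.funLeft _ _ Subtype.val
      have hker : Function.Injective (π.domRestrict C) := by
        rw [← LinearMap.ker_eq_bot, LinearMap.ker_eq_bot']
        rintro ⟨x, hx⟩ hx0
        have hout : ∀ e, e ∉ X → x e = 0 := fun e he =>
          congrFun hx0 ⟨e, Finset.mem_compl.2 he⟩
        have hin := hH X f hfinj (fun c => by rw [← hf c]; exact hpat _) x (fun c => by
          rw [← (hC x).1 hx (f c)]
          exact Finset.sum_subset (Finset.subset_univ _) fun e _ he => by
            rw [hout e he, mul_zero])
        ext e
        by_cases he : e ∈ X
        · exact hin e he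
        · exact hout e he
      have := LinearMap.finrank_le_finrank_of_injective hker
      rw [Module.finrank_fintype_fun_eq_card, Fintype.card_coe, Finset.card_compl] at this
      omega
    · have h1 := LinearMap.finrank_range_add_finrank_ker (Matrix.mulVecLin (Matrix.of H))
      have h2 := Submodule.finrank_le (LinearMap.range (Matrix.mulVecLin (Matrix.of H)))
      rw [Module.finrank_fintype_fun_eq_card] at h1 h2
      rw [hRcard] at h2
      change k ≤ Module.finrank (ZMod p) (LinearMap.ker (Matrix.mulVecLin (Matrix.of H)))
      omega
  · rintro x hx i ⟨e₀, he₀, hxe₀⟩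
    by_contra! hle
    -- Few nonzero coordinates in `N i` could be matched into the local rows of `i`,
    -- which do not see any other nonzero coordinate.
    let X : Finset ι := (N i).filter fun e => x e ≠ 0
    let f : X → (Σ i, Fin (b i)) ⊕ Fin g := fun c => Sum.inl ⟨i, Fin.castLE hle (X.equivFin c)⟩
    have hfinj : Function.Injective f := fun c d hcd => by
      simpa [f] using hcd
    exact hxe₀ (hH X f hfinj (fun c => (Finset.mem_filter.1 c.2).1) x (fun c => by
      rw [← (hC x).1 hx (f c)]
      refine Finset.sum_subset (Finset.subset_univ _) fun e _ he => ?_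
      by_cases hx0 : x e = 0
      · rw [hx0, mul_zero]
      · rw [hH0 (f c) e fun hN => he (Finset.mem_filter.2 ⟨show e ∈ N i from hN, hx0⟩), zero_mul]) e₀
        (Finset.mem_filter.2 ⟨he₀, hxe₀⟩))
  · intro x hx hx0
    let X : Finset ι := Finset.univ.filter fun e => x e ≠ 0
    have hXnorm : X.card = hammingNorm x := by
      simp only [X, hammingNorm]
    by_contra! hno
    -- If no `I` works, Hall's condition holds for the support of `x`, which is then empty.
    obtain ⟨f, hfinj, hfP⟩ := (Finset.all_card_le_biUnion_card_iff_exists_injective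
      (fun c : X => Finset.univ.filter fun ρ => rowPattern N b g ρ c)).1 (by
        intro s
        rcases s.eq_empty_or_nonempty with rfl | ⟨c₀, hc₀⟩
        · simp
        -- `I` collects the vertices whose local rows vanish on all of `s`.
        let I : Finset V := Finset.univ.filter fun i => ∀ c ∈ s, (c : ι) ∉ N i
        have hsub : (Finset.univ.sigma (fun i => if i ∈ I then ∅ else Finset.univ)).disjSum
            (Finset.univ : Finset (Fin g)) ⊆
            s.biUnion fun c : X => Finset.univ.filter fun ρ => rowPattern N b g ρ c := by
          rintro (⟨i, t⟩ | t) hq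
          · have hi : i ∉ I := by
              intro hi
              simp [hi] at hq
            simp only [I, Finset.mem_filter, Finset.mem_univ, true_and, not_forall, not_not] at hi
            obtain ⟨c, hc, hcN⟩ := hi
            exact Finset.mem_biUnion.2 ⟨c, hc, Finset.mem_filter.2 ⟨Finset.mem_univ _, hcN⟩⟩
          · exact Finset.mem_biUnion.2 ⟨c₀, hc₀, Finset.mem_filter.2 ⟨Finset.mem_univ _, trivial⟩⟩
        have hcard := Finset.card_le_card hsub
        rw [Finset.card_disjSum, Finset.card_sigma, Finset.card_univ, Fintype.card_fin] at hcard
        have hsum : ∑ i, (if i ∈ I then (∅ : Finset (Fin (b i))) else Finset.univ).card +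
            ∑ i ∈ I, b i = ∑ i, b i := by
          have hI : ∑ i ∈ I, b i = ∑ i, if i ∈ I then b i else 0 := by simp
          rw [hI, ← Finset.sum_add_distrib]
          refine Finset.sum_congr rfl fun i _ => ?_
          by_cases hi : i ∈ I <;> simp [hi]
        have hdisj : Disjoint (I.biUnion N) (s.map (Function.Embedding.subtype _)) := by
          rw [Finset.disjoint_left]
          intro e he hes
          obtain ⟨i, hi, hei⟩ := Finset.mem_biUnion.1 he
          obtain ⟨c, hc, rfl⟩ := Finset.mem_map.1 hes
          exact (Finset.mem_filter.1 hi).2 c hc hei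
        have h1 : (I.biUnion N).card + s.card ≤ Fintype.card ι := by
          rw [← Finset.card_map (s := s) (Function.Embedding.subtype _),
            ← Finset.card_union_of_disjoint hdisj]
          exact Finset.card_le_univ _
        have h2 : s.card ≤ X.card := by
          simpa using Finset.card_le_univ s
        have h3 := hno I
        omega)
    apply hx0
    have hin := hH X f hfinj (fun c => (Finset.mem_filter.1 (hfP c)).2) x (fun c => by
      rw [← (hC x).1 hx (f c)]
      refine Finset.sum_subset (Finset.subset_univ _) fun e _ he => ?_
      have : x e = 0 := by simpa [X] using he
      rw [this, mul_zero])
    ext e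
    by_contra he
    exact he (hin e (Finset.mem_filter.2 ⟨Finset.mem_univ _, he⟩))
  · intro I hI
    have hsum := Finset.sum_add_sum_compl I b
    obtain ⟨X, hX, hXc⟩ : ∃ X ⊆ (I.biUnion N)ᶜ, X.card = g + ∑ i ∈ Iᶜ, b i + 1 := by
      apply Finset.exists_subset_card_eq
      rw [Finset.card_compl]
      omega
    -- Only the global rows and the rows of vertices outside `I` meet the columns in `X`.
    let L : (X → ZMod p) →ₗ[ZMod p] ((Σ i : (Iᶜ : Finset V), Fin (b i)) ⊕ Fin g → ZMod p) :=
      Matrix.mulVecLin (Matrix.of fun ρ (e : X) =>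
        H (Sum.map (fun q => (⟨q.1, q.2⟩ : Σ i, Fin (b i))) id ρ) e)
    have hL : LinearMap.ker L ≠ ⊥ := by
      apply LinearMap.ker_ne_bot_of_finrank_lt
      rw [Module.finrank_fintype_fun_eq_card, Module.finrank_fintype_fun_eq_card,
        Fintype.card_coe, hXc, Fintype.card_sum, Fintype.card_sigma, Fintype.card_fin]
      simp only [Fintype.card_fin]
      rw [Finset.sum_coe_sort (Iᶜ) b]
      omega
    obtain ⟨y, hy, hy0⟩ := Submodule.exists_mem_ne_zero_of_ne_bot hL
    let x : ι → ZMod p := fun e => if he : e ∈ X then y ⟨e, he⟩ else 0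
    have hsumx : ∀ ρ, ∑ e, H ρ e * x e = ∑ e : X, H ρ e * y e := by
      intro ρ
      rw [← Finset.sum_subset (Finset.subset_univ X), ← Finset.sum_coe_sort X]
      · exact Finset.sum_congr rfl fun e _ => by simp [x]
      · intro e _ he
        simp [x, he]
    refine ⟨x, (hC x).2 ?_, ?_, ?_⟩
    · intro ρ
      rw [hsumx]
      rcases ρ with ⟨i, t⟩ | t
      · by_cases hi : i ∈ I
        · refine Finset.sum_eq_zero fun e _ => ?_
          rw [hH0, zero_mul]
          intro he
          exact Finset.mem_compl.1 (hX e.2) (Finset.mem_biUnion.2 ⟨i, hi, he⟩)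
        · exact congrFun (LinearMap.mem_ker.1 hy) (Sum.inl ⟨⟨i, Finset.mem_compl.2 hi⟩, t⟩)
      · exact congrFun (LinearMap.mem_ker.1 hy) (Sum.inr t)
    · intro h
      apply hy0
      ext e
      have := congrFun h e
      simpa [x] using this
    · have : hammingNorm x ≤ X.card := by
        apply Finset.card_le_card
        intro e he
        by_contra hne
        simp [x, hne] at he
      omega

end Core

/-! ### Coordinates indexed by vertices and edges -/

section Counting

variable {m : ℕ}

/-- The coordinate set attached to a weighted graph with edge set `W`: `a i` private coordinates
for each vertex `i`, and `c w` coordinates for each edge `w`, shared by its two endpoints. -/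
abbrev Coord (W : Finset (Sym2 (Fin m))) (a : Fin m → ℕ) (c : Sym2 (Fin m) → ℕ) : Type :=
  (Σ i, Fin (a i)) ⊕ (Σ w : W, Fin (c w))

/-- `x.inc i` says that the coordinate `x` belongs to the set attached to the vertex `i`. -/
def Coord.inc {W : Finset (Sym2 (Fin m))} {a : Fin m → ℕ} {c : Sym2 (Fin m) → ℕ} :
    Coord W a c → Fin m → Prop :=
  Sum.elim (fun q i => q.1 = i) (fun q i => i ∈ (q.1 : Sym2 (Fin m)))

theorem Coord.card_inc (W : Finset (Sym2 (Fin m))) (a : Fin m → ℕ) (c : Sym2 (Fin m) → ℕ)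
    (I : Finset (Fin m)) :
    (Finset.univ.filter fun x : Coord W a c => ∃ i ∈ I, x.inc i).card =
      ∑ i ∈ I, a i + ∑ w ∈ W.filter (fun w => ∃ i ∈ I, i ∈ w), c w := by
  rw [Finset.card_filter, Fintype.sum_sum_type, Fintype.sum_sigma, Fintype.sum_sigma]
  congr 1
  · have : ∑ i ∈ I, a i = ∑ i, if i ∈ I then a i else 0 := by simp
    rw [this]
    refine Finset.sum_congr rfl fun i _ => ?_
    by_cases hi : i ∈ I <;> simp [Coord.inc, hi]
  · rw [Finset.sum_filter, ← Finset.sum_coe_sort W]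
    refine Finset.sum_congr rfl fun w _ => ?_
    by_cases hw : ∃ i ∈ I, i ∈ (w : Sym2 (Fin m))
    · have h : ∀ t : Fin (c w), ∃ i ∈ I, Coord.inc (Sum.inr ⟨w, t⟩ : Coord W a c) i := fun _ => hw
      simp [h, hw]
    · have h : ∀ t : Fin (c w), ¬ ∃ i ∈ I, Coord.inc (Sum.inr ⟨w, t⟩ : Coord W a c) i := fun _ => hw
      rw [if_neg hw]
      exact Finset.sum_eq_zero fun t _ => if_neg (h t)

/-- An edge has two distinct endpoints, so the number of its endpoints in `I` is
`[w meets I] + [w lies within I]`. -/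
theorem sum_meets_add_sum_within (W : Finset (Sym2 (Fin m))) (hW : ∀ w ∈ W, ¬ w.IsDiag)
    (γ : Sym2 (Fin m) → ℤ) (I : Finset (Fin m)) :
    ∑ w ∈ W.filter (fun w => ∃ i ∈ I, i ∈ w), γ w +
      ∑ w ∈ W.filter (fun w => ∀ x ∈ w, x ∈ I), γ w =
    ∑ i ∈ I, ∑ w ∈ W.filter (fun w => i ∈ w), γ w := by
  simp only [Finset.sum_filter]
  rw [Finset.sum_comm, ← Finset.sum_add_distrib]
  refine Finset.sum_congr rfl fun w hw => ?_
  have hd := hW w hw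
  induction w with | _ u v => ?_
  rw [Sym2.mk_isDiag_iff] at hd
  have h1 : ∑ i ∈ I, (if i ∈ s(u, v) then γ s(u, v) else 0) =
      (if u ∈ I then γ s(u, v) else 0) + (if v ∈ I then γ s(u, v) else 0) := by
    rw [← Finset.sum_ite_eq' I u (fun _ => γ s(u, v)), ← Finset.sum_ite_eq' I v (fun _ => γ s(u, v)),
      ← Finset.sum_add_distrib]
    refine Finset.sum_congr rfl fun i _ => ?_
    simp only [Sym2.mem_iff]
    by_cases hu : i = u
    · subst hu; simp [hd]
    · simp [hu]
  rw [h1]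
  have h2 : (∃ i ∈ I, i ∈ s(u, v)) ↔ u ∈ I ∨ v ∈ I := by
    simp only [Sym2.mem_iff]
    constructor
    · rintro ⟨i, hi, rfl | rfl⟩ <;> simp [hi]
    · rintro (h | h)
      exacts [⟨u, h, .inl rfl⟩, ⟨v, h, .inr rfl⟩]
  have h3 : (∀ x ∈ s(u, v), x ∈ I) ↔ u ∈ I ∧ v ∈ I := by
    simp [Sym2.mem_iff]
  simp only [h2, h3]
  by_cases hu : u ∈ I <;> by_cases hv : v ∈ I <;> simp [hu, hv]

end Counting

/-! ### The graph construction -/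

/-- Graph construction of linear LRCs: a triangle-free graph `G` on `{1,…,m}` with
weights `α`, `β` on vertices and `γ` on edges, satisfying conditions (i)-(vi), yields
a linear `(n,k,d,r,δ)`-LRC with the stated `n` and `d`. -/
theorem graph_construction_linear_LRC
    (m : ℕ) (hm : 1 ≤ m)
    (G : SimpleGraph (Fin m)) [DecidableRel G.Adj]
    (htrianglefree : G.CliqueFree 3)
    (α β : Fin m → ℤ) (γ : Sym2 (Fin m) → ℤ)
    (k r δ : ℤ) (hr : 0 < r) (hrk : r < k) (hδ : 2 ≤ δ)
    (hα : ∀ i, 0 ≤ α i ∧ α i ≤ r - 1)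
    (hβ : ∀ i, 0 ≤ β i)
    (hγ : ∀ w ∈ G.edgeFinset, 1 ≤ γ w)
    (hk : k ≤ r * m - ∑ i, α i - ∑ w ∈ G.edgeFinset, γ w)
    (hloc : ∀ i, ∑ w ∈ G.edgeFinset.filter (fun w => i ∈ w), γ w < r - α i)
    (n d : ℤ)
    (hn : n = (r + δ - 1) * m - ∑ i, α i + ∑ i, β i - ∑ w ∈ G.edgeFinset, γ w)
    (hd : d = n - k + 1 -
      (((Finset.univ.powerset.filter
          (fun I : Finset (Fin m) =>
            r * I.card - ∑ i ∈ I, α i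
              - ∑ w ∈ G.edgeFinset.filter (fun w => ∀ x ∈ w, x ∈ I), γ w < k)).sup
          (fun I => ((δ - 1) * I.card + ∑ i ∈ I, β i).toNat) : ℕ) : ℤ))
    (nn : ℕ) (hnn : (nn : ℤ) = n) :
    ∃ (F : Type) (_ : Field F) (_ : Fintype F) (_ : DecidableEq F)
      (C : Submodule F (Fin nn → F)) (dc : ℕ),
      (Module.finrank F C : ℤ) = k ∧
      HasAllSymbolLocality C r δ ∧
      IsMinDist C dc ∧ (dc : ℤ) = d := by
  have hW : ∀ w ∈ G.edgeFinset, ¬ w.IsDiag := fun w hw =>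
    G.not_isDiag_of_mem_edgeFinset hw
  generalize G.edgeFinset = W at *
  -- Each `N i` gets `b i` local checks; `a i` private coordinates make up its size
  -- `r - α i + b i` once the `s i` coordinates shared along edges are counted.
  let s : Fin m → ℤ := fun i => ∑ w ∈ W.filter (fun w => i ∈ w), γ w
  have hs : ∀ i, 0 ≤ s i := fun i => Finset.sum_nonneg fun w hw =>
    zero_le_one.trans (hγ w (Finset.mem_filter.1 hw).1)
  let b : Fin m → ℕ := fun i => (δ - 1 + β i).toNat
  let a : Fin m → ℕ := fun i => (r - α i + (δ - 1) + β i - s i).toNat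
  let c : Sym2 (Fin m) → ℕ := fun w => (γ w).toNat
  have hb : ∀ i, (b i : ℤ) = δ - 1 + β i := fun i =>
    Int.toNat_of_nonneg (by have := hβ i; omega)
  have ha : ∀ i, (a i : ℤ) = r - α i + (δ - 1) + β i - s i := fun i =>
    Int.toNat_of_nonneg (by have := hβ i; have : s i < r - α i := hloc i; omega)
  have hc : ∀ w ∈ W, (c w : ℤ) = γ w := fun w hw =>
    Int.toNat_of_nonneg (by have := hγ w hw; omega)
  have hbsum : ∀ I : Finset (Fin m), ((∑ i ∈ I, b i : ℕ) : ℤ) = (δ - 1) * I.card + ∑ i ∈ I, β i := by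
    intro I
    push_cast
    simp only [hb, Finset.sum_add_distrib, Finset.sum_const, nsmul_eq_mul]
    ring
  have hcount : ∀ I : Finset (Fin m),
      ((Finset.univ.filter fun x : Coord W a c => ∃ i ∈ I, x.inc i).card : ℤ) =
        (∑ i ∈ I, b i : ℕ) + (r * I.card - ∑ i ∈ I, α i
          - ∑ w ∈ W.filter (fun w => ∀ x ∈ w, x ∈ I), γ w) := by
    intro I
    rw [Coord.card_inc, hbsum]
    push_cast
    have h1 := sum_meets_add_sum_within W hW γ I
    have h2 : ∑ w ∈ W.filter (fun w => ∃ i ∈ I, i ∈ w), (c w : ℤ) =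
        ∑ w ∈ W.filter (fun w => ∃ i ∈ I, i ∈ w), γ w :=
      Finset.sum_congr rfl fun w hw => hc w (Finset.mem_filter.1 hw).1
    have h3 : ∑ i ∈ I, s i = ∑ i ∈ I, ∑ w ∈ W.filter (fun w => i ∈ w), γ w := rfl
    rw [h2]
    simp only [ha, Finset.sum_add_distrib, Finset.sum_sub_distrib, Finset.sum_const, nsmul_eq_mul]
    linarith
  have hcov : ∀ x : Coord W a c, ∃ i, x.inc i := by
    rintro (⟨i, t⟩ | ⟨⟨w, hw⟩, t⟩)
    · exact ⟨i, rfl⟩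
    · exact ⟨w.out.1, Sym2.out_fst_mem w⟩
  have hbn : ((∑ i, b i : ℕ) : ℤ) + (r * m - ∑ i, α i - ∑ w ∈ W, γ w) = n := by
    rw [hbsum, Finset.card_univ, Fintype.card_fin, hn]
    ring
  have hE : Fintype.card (Fin nn) = Fintype.card (Coord W a c) := by
    have h := hcount Finset.univ
    simp only [Finset.mem_univ, true_and, hcov, Finset.filter_true, implies_true, Finset.card_univ,
      Fintype.card_fin] at h
    rw [Fintype.card_fin]
    omega
  let e : Fin nn ≃ Coord W a c := Fintype.equivOfCardEq hE
  let N : Fin m → Finset (Fin nn) := fun i => Finset.univ.filter fun j => (e j).inc i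
  have hfilter : ∀ (Q : Coord W a c → Prop) (Q' : Fin nn → Prop) [DecidablePred Q]
      [DecidablePred Q'], (∀ j, Q' j ↔ Q (e j)) →
      (Finset.univ.filter Q').card = (Finset.univ.filter Q).card := by
    intro Q Q' _ _ h
    rw [Finset.card_filter, Finset.card_filter, ← e.sum_comp fun x => if Q x then 1 else 0]
    simp only [h]
  have hN : ∀ I : Finset (Fin m), ((I.biUnion N).card : ℤ) =
        (∑ i ∈ I, b i : ℕ) + (r * I.card - ∑ i ∈ I, α i
          - ∑ w ∈ W.filter (fun w => ∀ x ∈ w, x ∈ I), γ w) := by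
    intro I
    rw [← hcount I, ← hfilter _ (fun j => ∃ i ∈ I, (e j).inc i) fun _ => Iff.rfl]
    congr 2
    ext j
    simp [N]
  obtain ⟨kk, rfl⟩ := Int.eq_ofNat_of_zero_le (show 0 ≤ k by omega)
  have hpriv : ∀ i, b i ≤ (Finset.univ.filter fun j => ∀ i', j ∈ N i' ↔ i' = i).card := by
    intro i
    have h1 : (Finset.univ.filter fun j => ∀ i', j ∈ N i' ↔ i' = i).card =
        (Finset.univ.filter fun x : Coord W a c => ∀ i', x.inc i' ↔ i' = i).card :=
      hfilter _ _ fun j => by simp [N]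
    have h2 : a i ≤ (Finset.univ.filter fun x : Coord W a c => ∀ i', x.inc i' ↔ i' = i).card := by
      let φ : Fin (a i) ↪ Coord W a c :=
        ⟨fun t => Sum.inl ⟨i, t⟩, fun t t' h => by simpa using h⟩
      calc a i = (Finset.univ.map φ).card := by simp
        _ ≤ _ := Finset.card_le_card fun x hx => by
          obtain ⟨t, -, rfl⟩ := Finset.mem_map.1 hx
          exact Finset.mem_filter.2 ⟨Finset.mem_univ _, fun i' => eq_comm⟩
    have h3 := ha i
    have h4 := hb i
    have h5 : s i < r - α i := hloc i
    omega
  -- The remaining codimension is taken up by unrestricted global checks.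
  obtain ⟨p, hp, C, hdim, hlocal, hlower, hupper⟩ := exists_code N b
    (r * m - ∑ i, α i - ∑ w ∈ W, γ w - kk).toNat kk
    (by rw [Fintype.card_fin]; omega) (fun i => by convert hpriv i)
  rw [Fintype.card_fin] at hlower hupper
  refine ⟨ZMod p, inferInstance, inferInstance, inferInstance, C, ?_⟩
  have hV : ∀ I : Finset (Fin m), (I.biUnion N).card < kk + ∑ i ∈ I, b i ↔
      r * I.card - ∑ i ∈ I, α i - ∑ w ∈ W.filter (fun w => ∀ x ∈ w, x ∈ I), γ w < kk := by
    intro I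
    have := hN I
    omega
  have htoNat : ∀ I : Finset (Fin m),
      ((δ - 1) * I.card + ∑ i ∈ I, β i).toNat = ∑ i ∈ I, b i := by
    intro I
    rw [← hbsum, Int.toNat_natCast]
  simp only [htoNat] at hd
  generalize h𝒱 : Finset.filter (fun I : Finset (Fin m) =>
    r * I.card - ∑ i ∈ I, α i - ∑ w ∈ W.filter (fun w => ∀ x ∈ w, x ∈ I), γ w < kk)
    Finset.univ.powerset = 𝒱 at hd
  have hmem : ∀ I, I ∈ 𝒱 ↔ (I.biUnion N).card < kk + ∑ i ∈ I, b i := by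
    intro I
    rw [← h𝒱, hV]
    simp
  generalize hTdef : 𝒱.sup (fun I => ∑ i ∈ I, b i) = T at hd
  obtain ⟨I₀, hI₀, hI₀T⟩ : ∃ I : Finset (Fin m),
      (I.biUnion N).card < kk + ∑ i ∈ I, b i ∧ ∑ i ∈ I, b i = T := by
    obtain ⟨I, hI, h⟩ := Finset.exists_mem_eq_sup 𝒱 ⟨∅, (hmem ∅).2 (by simp; omega)⟩
      (fun I : Finset (Fin m) => ∑ i ∈ I, b i)
    exact ⟨I, (hmem I).1 hI, h.symm.trans hTdef⟩
  have hlow : ∀ x ∈ C, x ≠ 0 → nn + 1 ≤ hammingNorm x + kk + T := by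
    intro x hx hx0
    obtain ⟨I, hI, h⟩ := hlower x hx hx0
    have : ∑ i ∈ I, b i ≤ T := by
      rw [← hTdef]
      exact Finset.le_sup (f := fun I : Finset (Fin m) => ∑ i ∈ I, b i)
        ((hmem I).2 hI)
    omega
  obtain ⟨x₀, hx₀, hx₀0, hx₀w⟩ := hupper I₀ hI₀
  have hx₀l := hlow x₀ hx₀ hx₀0
  refine ⟨hammingNorm x₀, by rw [hdim], ?_, ⟨⟨x₀, hx₀, 0, C.zero_mem, hx₀0, ?_⟩, ?_⟩, ?_⟩
  · intro j
    obtain ⟨i, hi⟩ := hcov (e j)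
    have hj : j ∈ N i := Finset.mem_filter.2 ⟨Finset.mem_univ _, hi⟩
    have hNi := hN {i}
    rw [Finset.singleton_biUnion, Finset.sum_singleton, Finset.sum_singleton,
      Finset.card_singleton] at hNi
    have hin : 0 ≤ ∑ w ∈ W.filter (fun w => ∀ x ∈ w, x ∈ ({i} : Finset (Fin m))), γ w :=
      Finset.sum_nonneg fun w hw => zero_le_one.trans (hγ w (Finset.mem_filter.1 hw).1)
    have hbi := hb i
    have hαi := hα i
    have hβi := hβ i
    have hpos : 1 ≤ (N i).card := Finset.card_pos.2 ⟨j, hj⟩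
    -- `N i` itself may be too large; a subset containing `j` and missing at most `β i`
    -- coordinates of `N i` still sees weight at least `b i + 1 - β i = δ`.
    obtain ⟨S, hjS, hSN, hSc⟩ := Finset.exists_subsuperset_card_eq
      (s := {j}) (t := N i) (n := min (r - α i + δ - 1).toNat (N i).card)
      (Finset.singleton_subset_iff.2 hj) (by rw [Finset.card_singleton]; omega) (min_le_right _ _)
    refine ⟨S, Finset.singleton_subset_iff.1 hjS, by omega, ?_⟩
    rintro x hx y hy ⟨l, hl, hxy⟩
    have hw := hlocal (x - y) (C.sub_mem hx hy) i ⟨l, hSN hl, sub_ne_zero.2 hxy⟩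
    have hsub : ((N i).filter fun e => (x - y) e ≠ 0) ⊆
        (S.filter fun e => x e ≠ y e) ∪ (N i \ S) := by
      intro l hl
      rw [Finset.mem_filter, Pi.sub_apply, sub_ne_zero] at hl
      by_cases hlS : l ∈ S
      · exact Finset.mem_union_left _ (Finset.mem_filter.2 ⟨hlS, hl.2⟩)
      · exact Finset.mem_union_right _ (Finset.mem_sdiff.2 ⟨hl.1, hlS⟩)
    have h1 := (Finset.card_le_card hsub).trans (Finset.card_union_le _ _)
    rw [Finset.card_sdiff_of_subset hSN] at h1
    have h2 : (S.filter fun e => x e ≠ y e).card = projDist S x y := by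
      unfold projDist
      congr!
    omega
  · rw [hammingDist_zero_right]
  · intro x hx y hy hxy
    have := hlow (-x + y) (C.add_mem (C.neg_mem hx) hy) (by rwa [Ne, neg_add_eq_zero])
    rw [hammingDist_eq_hammingNorm]
    omega
  · omega
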